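/- arXiv:1310.4882 — 3 statements merged into one kernel-verified Lean document; each statement's English description precedes it below -/
import Mathlib

section
/- Let G be a group with a δ-hyperbolic length function l : G → ℤ, and let δ₁ ∈ ℤ with δ₁ > δ. Define l_H : G × G → ℤ² (ℤ² taken with the right lexicographic order) by l_H(f,g) = (l(f), l(g)). Then l_H is a length function on H = G × G, i.e. l_H(1,1) = 0, l_H(h) ≥ 0, l_H(h⁻¹) = l_H(h), l_H(h₁h₂) ≤ l_H(h₁) + l_H(h₂), and l_H is δ_H-hyperbolic for δ_H = (δ₁, δ₁): C_H(h₁,h₂) ≥ min(C_H(h₁,h₃), C_H(h₂,h₃)) − 2δ_H for all h₁,h₂,h₃ ∈ H, where C_H(a,b) = l_H(a) + l_H(b) − l_H(a⁻¹b). -/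
/-!
In the lexicographic order a strict inequality between leading coordinates settles the comparison,
whatever the other coordinate does. Raising `δ` to some `δ₁ > δ` makes the hyperbolicity inequality
of the leading coordinate strict.
-/

/-- Length functions on a group: axioms (Λ1)–(Λ3). -/
structure IsLengthFunction {G Λ : Type*} [Group G] [AddMonoid Λ] [Preorder Λ] (l : G → Λ) :
    Prop where
  protected map_one : l 1 = 0
  nonneg (g : G) : 0 ≤ l g
  protected map_inv (g : G) : l g⁻¹ = l g
  protected map_mul_le (g h : G) : l (g * h) ≤ l g + l h

/-- Twice the Gromov product, `C(g, h)`; the factor two avoids halving in `Λ`. -/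
def twiceGromovProduct {G Λ : Type*} [Group G] [AddGroup Λ] (l : G → Λ) (g h : G) : Λ :=
  l g + l h - l (g⁻¹ * h)

/-- `δ`-hyperbolicity of a function on a group: axiom (Λ4, δ). The length function axioms are kept
separate, in `IsLengthFunction`. -/
def IsGromovHyperbolic {G Λ : Type*} [Group G] [AddGroup Λ] [LinearOrder Λ] (δ : Λ) (l : G → Λ) :
    Prop :=
  ∀ f g h : G, min (twiceGromovProduct l f h) (twiceGromovProduct l g h) - 2 • δ ≤
    twiceGromovProduct l f g

/-- The lexicographic product of functions on two groups, the paper's `l_H`. The paper's order is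
right lexicographic, so the value of `l₂` comes first in `M ×ₗ Λ`. -/
def lexProdLength {G H Λ M : Type*} (l₁ : G → Λ) (l₂ : H → M) (p : G × H) : M ×ₗ Λ :=
  toLex (l₂ p.2, l₁ p.1)

namespace IsLengthFunction

variable {G H Λ M : Type*} [Group G] [Group H] [AddMonoid Λ] [AddMonoid M]

protected theorem comp [Preorder Λ] {l : G → Λ} (hl : IsLengthFunction l) (φ : H →* G) :
    IsLengthFunction (l ∘ φ) where
  map_one := by rw [Function.comp_apply, map_one, hl.map_one]
  nonneg h := hl.nonneg (φ h)
  map_inv h := by simp only [Function.comp_apply, map_inv, hl.map_inv]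
  map_mul_le g h := by
    simpa only [Function.comp_apply, map_mul] using hl.map_mul_le (φ g) (φ h)

theorem toLex_prodMk [Preorder Λ] [PartialOrder M] {l : G → Λ} {m : G → M}
    (hm : IsLengthFunction m) (hl : IsLengthFunction l) :
    IsLengthFunction fun g ↦ toLex (m g, l g) where
  map_one := by rw [hm.map_one, hl.map_one, Prod.mk_zero_zero, toLex_zero]
  nonneg g := Prod.Lex.toLex_mono ⟨hm.nonneg g, hl.nonneg g⟩
  map_inv g := by rw [hm.map_inv, hl.map_inv]
  map_mul_le g h := Prod.Lex.toLex_mono ⟨hm.map_mul_le g h, hl.map_mul_le g h⟩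

protected theorem lexProdLength [Preorder Λ] [PartialOrder M] {l₁ : G → Λ} {l₂ : H → M}
    (h₁ : IsLengthFunction l₁) (h₂ : IsLengthFunction l₂) :
    IsLengthFunction (lexProdLength l₁ l₂) :=
  (h₂.comp (MonoidHom.snd G H)).toLex_prodMk (h₁.comp (MonoidHom.fst G H))

end IsLengthFunction

theorem fst_ofLex_twiceGromovProduct {G Λ M : Type*} [Group G] [AddGroup Λ] [AddGroup M]
    (l : G → M ×ₗ Λ) (g h : G) :
    (ofLex (twiceGromovProduct l g h)).1 = twiceGromovProduct (fun g ↦ (ofLex (l g)).1) g h :=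
  rfl

theorem fst_ofLex_min {Λ M : Type*} [LinearOrder Λ] [LinearOrder M] (x y : M ×ₗ Λ) :
    (ofLex (min x y)).1 = min (ofLex x).1 (ofLex y).1 :=
  Prod.Lex.monotone_fst_ofLex.map_min

namespace IsGromovHyperbolic

variable {G H Λ M : Type*} [Group G] [Group H] [AddGroup Λ] [LinearOrder Λ]

protected theorem comp {δ : Λ} {l : G → Λ} (hl : IsGromovHyperbolic δ l) (φ : H →* G) :
    IsGromovHyperbolic δ (l ∘ φ) := fun f g h ↦ by
  simpa only [twiceGromovProduct, Function.comp_apply, map_mul, map_inv] using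
    hl (φ f) (φ g) (φ h)

variable [AddCommGroup M] [LinearOrder M] [IsOrderedAddMonoid M] {δ δ₁ : M}

theorem sub_two_nsmul_lt {l : G → M} (hl : IsGromovHyperbolic δ l) (hδ : δ < δ₁) (f g h : G) :
    min (twiceGromovProduct l f h) (twiceGromovProduct l g h) - 2 • δ₁ <
      twiceGromovProduct l f g :=
  (sub_lt_sub_left (nsmul_lt_nsmul_right two_ne_zero hδ) _).trans_le (hl f g h)

theorem of_fst_ofLex {l : G → M ×ₗ Λ} (hl : IsGromovHyperbolic δ fun g ↦ (ofLex (l g)).1)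
    (hδ : δ < δ₁) (ε : Λ) : IsGromovHyperbolic (toLex (δ₁, ε)) l := by
  intro f g h
  have h_lead := hl.sub_two_nsmul_lt hδ f g h
  simp only [← fst_ofLex_twiceGromovProduct, ← fst_ofLex_min] at h_lead
  exact Prod.Lex.le_iff.mpr (Or.inl h_lead)

protected theorem lexProdLength {l₂ : H → M} (hl₂ : IsGromovHyperbolic δ l₂) (hδ : δ < δ₁)
    (l₁ : G → Λ) (ε : Λ) : IsGromovHyperbolic (toLex (δ₁, ε)) (lexProdLength l₁ l₂) :=
  (hl₂.comp (MonoidHom.snd G H)).of_fst_ofLex hδ ε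

end IsGromovHyperbolic

theorem product_length_function_hyperbolic_general {G H Λ M : Type*} [Group G] [Group H]
    [AddGroup Λ] [LinearOrder Λ] [AddCommGroup M] [LinearOrder M] [IsOrderedAddMonoid M]
    {l₁ : G → Λ} {l₂ : H → M} {δ δ₁ : M} (hl₁ : IsLengthFunction l₁) (hl₂ : IsLengthFunction l₂)
    (hyp : IsGromovHyperbolic δ l₂) (hδ : δ < δ₁) (ε : Λ) :
    IsLengthFunction (lexProdLength l₁ l₂) ∧
      IsGromovHyperbolic (toLex (δ₁, ε)) (lexProdLength l₁ l₂) :=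
  ⟨hl₁.lexProdLength hl₂, hyp.lexProdLength hδ l₁ ε⟩

/-- Let `l : G → ℤ` be a `δ`-hyperbolic length function and `δ₁ > δ`. On `H = G × G` define
`l_H(f,g) = (l f, l g) ∈ ℤ²` with the right lexicographic order (realized as
`Lex (ℤ × ℤ)` via `(a,b) ↦ toLex (b,a)`, so the second component is compared first).
Then `l_H` is a length function on `H` and it is `δ_H`-hyperbolic for
`δ_H = (δ₁, δ₁)`: `C_H(h₁,h₂) ≥ min (C_H(h₁,h₃)) (C_H(h₂,h₃)) - 2δ_H`, where
`C_H(a,b) = l_H a + l_H b - l_H (a⁻¹ b)` is twice the Gromov product. -/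
theorem product_length_function_hyperbolic
    {G : Type*} [Group G] (l : G → ℤ) (δ : ℤ) (hδ : 0 ≤ δ)
    (l_one : l 1 = 0) (l_nonneg : ∀ g : G, 0 ≤ l g)
    (l_inv : ∀ g : G, l g⁻¹ = l g)
    (l_mul : ∀ g h : G, l (g * h) ≤ l g + l h)
    (l_hyp : ∀ f g h : G,
      l f + l g - l (f⁻¹ * g) ≥
        min (l f + l h - l (f⁻¹ * h)) (l g + l h - l (g⁻¹ * h)) - 2 * δ)
    (δ₁ : ℤ) (hδ₁ : δ < δ₁) :
    let lH : G × G → Lex (ℤ × ℤ) := fun p => toLex (l p.2, l p.1)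
    let δH : Lex (ℤ × ℤ) := toLex (δ₁, δ₁)
    (lH (1, 1) = 0) ∧
    (∀ h : G × G, 0 ≤ lH h) ∧
    (∀ h : G × G, lH h⁻¹ = lH h) ∧
    (∀ h₁ h₂ : G × G, lH (h₁ * h₂) ≤ lH h₁ + lH h₂) ∧
    (∀ h₁ h₂ h₃ : G × G,
      lH h₁ + lH h₂ - lH (h₁⁻¹ * h₂) ≥
        min (lH h₁ + lH h₃ - lH (h₁⁻¹ * h₃)) (lH h₂ + lH h₃ - lH (h₂⁻¹ * h₃))
          - 2 • δH) := by
  have hl : IsLengthFunction l := ⟨l_one, l_nonneg, l_inv, l_mul⟩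
  obtain ⟨⟨h_one, h_nonneg, h_inv, h_mul⟩, h_hyp⟩ :=
    product_length_function_hyperbolic_general hl hl l_hyp hδ₁ δ₁
  exact ⟨h_one, h_nonneg, h_inv, h_mul, h_hyp⟩
end

section
/- Let l : G → ℤ be a complete length function on a group G (axioms (Λ1)–(Λ3) and (C)), and let S = {g ∈ G | l(g) ≤ 1}. Then S generates G; more precisely: (i) every g ∈ G is the product of a list of at most max(l(g), 1) elements of S, and (ii) if g is the product of a list of n elements of S, then l(g) ≤ n. (This is the core of the characterization: a group G is δ-hyperbolic if and only if it admits a complete δ-hyperbolic length function l : G → ℤ with {g ∈ G | l(g) ≤ 1} finite, l then being the word length with respect to the finite generating set S.) -/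
/-!
Completeness at `α = 1` splits off, from the left of an element of length greater than `1`, a
factor of length `1`, and the length of the remainder drops by one. The process stops once the
remainder has length at most `1`; that remainder is itself a factor, whence `max (l g) 1`.
-/

section Monoid

variable {M : Type*} [Monoid M]

theorem apply_list_prod_le_length_nsmul {A : Type*} [AddMonoid A] [Preorder A] [AddLeftMono A]
    [AddRightMono A] {l : M → A} (l_one : l 1 ≤ 0) (l_mul : ∀ g h : M, l (g * h) ≤ l g + l h)
    {c : A} {L : List M} (hL : ∀ s ∈ L, l s ≤ c) : l L.prod ≤ L.length • c :=
  calc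
    l L.prod ≤ (L.map l).sum := L.apply_prod_le_sum_map l l_one l_mul
    _ ≤ (L.map l).length • c := List.sum_le_card_nsmul _ c (List.forall_mem_map.mpr hL)
    _ = L.length • c := by rw [List.length_map]

theorem exists_list_prod_eq_length_le_max {l : M → ℤ}
    (split : ∀ g : M, 1 < l g → ∃ u v : M, u * v = g ∧ l u ≤ 1 ∧ l v < l g) (g : M) :
    ∃ L : List M, (∀ s ∈ L, l s ≤ 1) ∧ L.prod = g ∧ (L.length : ℤ) ≤ max (l g) 1 := by
  by_cases hg : l g ≤ 1
  · exact ⟨[g], List.forall_mem_singleton.mpr hg, List.prod_singleton, le_max_right _ _⟩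
  · obtain ⟨u, v, huv, hu, hv⟩ := split g (not_le.mp hg)
    obtain ⟨L, hL, hLv, hlen⟩ := exists_list_prod_eq_length_le_max split v
    refine ⟨u :: L, List.forall_mem_cons.mpr ⟨hu, hL⟩, by rw [List.prod_cons, hLv, huv], ?_⟩
    rw [List.length_cons]
    lia
termination_by (l g).toNat
decreasing_by lia

theorem complete_length_function_word_length_general (l : M → ℤ) (l_one : l 1 ≤ 0)
    (l_mul : ∀ g h : M, l (g * h) ≤ l g + l h)
    (split : ∀ g : M, 1 < l g → ∃ u v : M, u * v = g ∧ l u ≤ 1 ∧ l v < l g) :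
    (∀ g : M, ∃ L : List M,
      (∀ s ∈ L, l s ≤ 1) ∧ L.prod = g ∧ (L.length : ℤ) ≤ max (l g) 1) ∧
    (∀ L : List M, (∀ s ∈ L, l s ≤ 1) → l L.prod ≤ (L.length : ℤ)) :=
  ⟨exists_list_prod_eq_length_le_max split, fun L hL ↦ by
    simpa only [nsmul_one] using apply_list_prod_le_length_nsmul l_one l_mul hL⟩

end Monoid

theorem exists_mul_eq_of_complete {G : Type*} [Group G] {l : G → ℤ}
    (complete : ∀ g : G, ∀ α : ℤ, 0 ≤ α → α ≤ l g →
      ∃ u : G, l u = α ∧ l g = l u + l (u⁻¹ * g))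
    (g : G) (hg : 1 < l g) : ∃ u v : G, u * v = g ∧ l u ≤ 1 ∧ l v < l g := by
  obtain ⟨u, hu, hgu⟩ := complete g 1 zero_le_one hg.le
  exact ⟨u, u⁻¹ * g, mul_inv_cancel_left u g, hu.le, by lia⟩

/-- Let `l : G → ℤ` be a complete length function and `S = {g | l g ≤ 1}`. Then `S`
generates `G`: (i) every `g ∈ G` is a product of a list of at most `max (l g) 1` elements
of `S`, and (ii) if `g` is the product of a list of `n` elements of `S`, then `l g ≤ n`.
(This is the core of: `G` is `δ`-hyperbolic iff it has a complete `δ`-hyperbolic length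
function `l : G → ℤ` with `{g | l g ≤ 1}` finite, `l` being the word length w.r.t. `S`.) -/
theorem complete_length_function_word_length
    {G : Type*} [Group G] (l : G → ℤ)
    (l_one : l 1 = 0) (l_nonneg : ∀ g : G, 0 ≤ l g)
    (l_inv : ∀ g : G, l g⁻¹ = l g)
    (l_mul : ∀ g h : G, l (g * h) ≤ l g + l h)
    (complete : ∀ g : G, ∀ α : ℤ, 0 ≤ α → α ≤ l g →
      ∃ u : G, l u = α ∧ l g = l u + l (u⁻¹ * g)) :
    (∀ g : G, ∃ L : List G,
      (∀ s ∈ L, l s ≤ 1) ∧ L.prod = g ∧ (L.length : ℤ) ≤ max (l g) 1) ∧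
    (∀ L : List G, (∀ s ∈ L, l s ≤ 1) → l L.prod ≤ (L.length : ℤ)) :=
  complete_length_function_word_length_general l l_one.le l_mul
    (exists_mul_eq_of_complete complete)
end

section
/- Let δ and n be natural numbers with δ ≥ 1. Consider the step relation on finite multisets of natural numbers in which a multiset M + {k} steps to M + {k₁, k₂} whenever k > 2δ, k₁ < k, k₂ < k, and k ≤ k₁ + k₂ ≤ k + 2δ. Then every multiset obtainable from the singleton multiset {n} by finitely many such steps (i.e. in the reflexive-transitive closure of the step relation) has sum at most 4δn. In particular, the maximal total τ(n) obtained by repeatedly splitting n until all parts are at most 2δ satisfies τ(n) ≤ 4δn. -/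
/-- The splitting step: a multiset `k ::ₘ M` with `k > 2δ` steps to `k₁ ::ₘ k₂ ::ₘ M`
where `k₁, k₂ < k` and `k ≤ k₁ + k₂ ≤ k + 2δ`. -/
def SplitStep (δ : ℕ) (M₁ M₂ : Multiset ℕ) : Prop :=
  ∃ (k k₁ k₂ : ℕ) (M : Multiset ℕ),
    M₁ = k ::ₘ M ∧ M₂ = k₁ ::ₘ k₂ ::ₘ M ∧
    2 * δ < k ∧ k₁ < k ∧ k₂ < k ∧ k ≤ k₁ + k₂ ∧ k₁ + k₂ ≤ k + 2 * δ

/-!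
Give a part `k ≤ 2δ` the weight `k` and a part `k > 2δ` the weight `4δ(k - 2δ)`. When both parts of
a split exceed `2δ`, their excesses over `2δ` add up to at most the excess of `k`. Otherwise one of
them weighs at most `2δ`, and the other, being smaller than `k`, weighs at least `2δ` less than `k`.
So the total weight never increases. For `δ ≥ 1` the weight of a part lies between the part itself
and `4δ` times it.
-/

/-- The potential of a part `k`, whose sum over all parts never increases under `SplitStep δ`.
For `δ ≥ 1` it is the maximal total `τ(k)` itself: a part `k > 2δ + 1` can be split into `2δ + 1`
and `k - 1`, and `2δ + 1` into two parts `2δ`. -/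
def splitPotential (δ k : ℕ) : ℕ :=
  if k ≤ 2 * δ then k else 4 * δ * (k - 2 * δ)

section Potential

variable {δ k k₁ k₂ : ℕ}

theorem splitPotential_of_le (hk : k ≤ 2 * δ) : splitPotential δ k = k :=
  if_pos hk

theorem splitPotential_of_lt (hk : 2 * δ < k) : splitPotential δ k = 4 * δ * (k - 2 * δ) :=
  if_neg hk.not_ge

theorem splitPotential_add_two_mul_le (hk : 2 * δ < k) (hlt : k₁ < k) :
    splitPotential δ k₁ + 2 * δ ≤ splitPotential δ k := by
  rw [splitPotential_of_lt hk]
  rcases le_or_gt k₁ (2 * δ) with hk₁ | hk₁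
  · calc splitPotential δ k₁ + 2 * δ = k₁ + 2 * δ := by rw [splitPotential_of_le hk₁]
      _ ≤ 4 * δ * 1 := by lia
      _ ≤ 4 * δ * (k - 2 * δ) := by gcongr; lia
  · calc splitPotential δ k₁ + 2 * δ = 4 * δ * (k₁ - 2 * δ) + 2 * δ := by
          rw [splitPotential_of_lt hk₁]
      _ ≤ 4 * δ * (k₁ - 2 * δ + 1) := by lia
      _ ≤ 4 * δ * (k - 2 * δ) := by gcongr; lia

theorem splitPotential_add_le (hk : 2 * δ < k) (hlt₁ : k₁ < k) (hlt₂ : k₂ < k)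
    (hsum : k₁ + k₂ ≤ k + 2 * δ) :
    splitPotential δ k₁ + splitPotential δ k₂ ≤ splitPotential δ k := by
  have drop₁ := splitPotential_add_two_mul_le hk hlt₁
  have drop₂ := splitPotential_add_two_mul_le hk hlt₂
  rcases le_or_gt k₁ (2 * δ) with hk₁ | hk₁
  · rw [splitPotential_of_le hk₁]
    lia
  rcases le_or_gt k₂ (2 * δ) with hk₂ | hk₂
  · rw [splitPotential_of_le hk₂]
    lia
  rw [splitPotential_of_lt hk, splitPotential_of_lt hk₁, splitPotential_of_lt hk₂, ← mul_add]
  gcongr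
  lia

theorem le_splitPotential (hδ : 1 ≤ δ) (k : ℕ) : k ≤ splitPotential δ k := by
  rcases le_or_gt k (2 * δ) with hk | hk
  · exact (splitPotential_of_le hk).ge
  · rw [splitPotential_of_lt hk]
    calc k = 2 * δ * 1 + 1 * (k - 2 * δ) := by lia
      _ ≤ 2 * δ * (k - 2 * δ) + 2 * δ * (k - 2 * δ) := by gcongr <;> lia
      _ = 4 * δ * (k - 2 * δ) := by ring

theorem splitPotential_le (hδ : 1 ≤ δ) (k : ℕ) : splitPotential δ k ≤ 4 * δ * k := by
  rcases le_or_gt k (2 * δ) with hk | hk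
  · rw [splitPotential_of_le hk]
    exact Nat.le_mul_of_pos_left k (by lia)
  · rw [splitPotential_of_lt hk]
    gcongr
    exact Nat.sub_le k (2 * δ)

end Potential

theorem SplitStep.sum_map_le {N : Type*} [AddCommMonoid N] [Preorder N] [AddLeftMono N]
    {δ : ℕ} {φ : ℕ → N}
    (hφ : ∀ ⦃k k₁ k₂ : ℕ⦄, 2 * δ < k → k₁ < k → k₂ < k → k ≤ k₁ + k₂ → k₁ + k₂ ≤ k + 2 * δ →
      φ k₁ + φ k₂ ≤ φ k)
    {M₁ M₂ : Multiset ℕ} (h : SplitStep δ M₁ M₂) : (M₂.map φ).sum ≤ (M₁.map φ).sum := by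
  obtain ⟨k, k₁, k₂, M, rfl, rfl, hk, hlt₁, hlt₂, hle, hsum⟩ := h
  simp only [Multiset.map_cons, Multiset.sum_cons, ← add_assoc]
  gcongr
  exact hφ hk hlt₁ hlt₂ hle hsum

theorem sum_map_splitPotential_le {δ : ℕ} {M₁ M₂ : Multiset ℕ}
    (h : Relation.ReflTransGen (SplitStep δ) M₁ M₂) :
    (M₂.map (splitPotential δ)).sum ≤ (M₁.map (splitPotential δ)).sum := by
  induction h with
  | refl => exact le_rfl
  | tail _ hstep ih =>
    refine le_trans (hstep.sum_map_le ?_) ih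
    exact fun _ _ _ hk hlt₁ hlt₂ _ hsum => splitPotential_add_le hk hlt₁ hlt₂ hsum

theorem splitSum_le_general {δ : ℕ} (hδ : 1 ≤ δ) {M₁ M₂ : Multiset ℕ}
    (h : Relation.ReflTransGen (SplitStep δ) M₁ M₂) : M₂.sum ≤ 4 * δ * M₁.sum :=
  calc M₂.sum = (M₂.map id).sum := by rw [Multiset.map_id]
    _ ≤ (M₂.map (splitPotential δ)).sum :=
      Multiset.sum_map_le_sum_map _ _ fun k _ => le_splitPotential hδ k
    _ ≤ (M₁.map (splitPotential δ)).sum := sum_map_splitPotential_le h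
    _ ≤ (M₁.map (4 * δ * ·)).sum :=
      Multiset.sum_map_le_sum_map _ _ fun k _ => splitPotential_le hδ k
    _ = 4 * δ * M₁.sum := by rw [Multiset.sum_map_mul_left, Multiset.map_id']

/-- Let `δ ≥ 1` and `n` be natural numbers. Every multiset obtainable from the singleton
`{n}` by finitely many splitting steps has sum at most `4δn`. In particular the maximal
total `τ(n)` obtained by repeatedly splitting `n` until all parts are at most `2δ`
satisfies `τ(n) ≤ 4δn`. -/
theorem splitSum_le (δ n : ℕ) (hδ : 1 ≤ δ) :
    ∀ M : Multiset ℕ, Relation.ReflTransGen (SplitStep δ) {n} M →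
      M.sum ≤ 4 * δ * n := by
  intro M hM
  simpa only [Multiset.sum_singleton] using splitSum_le_general hδ hM
end
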